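/- Under Assumptions 1, 2, 3 and 4, the sequence Q_n is asymptotically efficient, i.e. R_Q(B) = lim_{n→∞} −(1/n) log E_{Q_n}[L_n² 1_{M_n∈B}] exists and equals 2 I_P(B), if and only if both I_Q^B(w*) = 0 (typicality condition) and −2 ∈ ∂I_Q^B(w*) (steepness condition) hold (Theorem 1). -/

import Mathlib

open MeasureTheory Filter Set Topology
open scoped ENNReal NNReal

/-- A sequence of measures satisfies the large deviation principle with rate function `I`:
upper bound over closed sets and lower bound over open sets, at exponential speed `n`. -/
def SatisfiesLDP {X : Type*} [TopologicalSpace X] [MeasurableSpace X]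
    (mu : ℕ → Measure X) (I : X → ℝ≥0∞) : Prop :=
  (∀ F : Set X, IsClosed F →
      limsup (fun n : ℕ => (((n : ℝ)⁻¹ : ℝ) : EReal) * ENNReal.log (mu n F)) atTop
        ≤ -(⨅ x ∈ F, (I x : EReal))) ∧
  (∀ G : Set X, IsOpen G →
      -(⨅ x ∈ G, (I x : EReal)) ≤
        liminf (fun n : ℕ => (((n : ℝ)⁻¹ : ℝ) : EReal) * ENNReal.log (mu n G)) atTop)

/-- A good rate function: lower semicontinuous with compact sublevel sets. -/
def IsGoodRate {X : Type*} [TopologicalSpace X] (I : X → ℝ≥0∞) : Prop :=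
  LowerSemicontinuous I ∧ ∀ c : ℝ≥0∞, c ≠ ⊤ → IsCompact {x | I x ≤ c}

/-- The subdifferential of an extended-real-valued function on ℝ at a point. -/
def Subdiff (f : ℝ → EReal) (x : ℝ) : Set ℝ :=
  {k | ∀ y : ℝ, f x + ((k * (y - x) : ℝ) : EReal) ≤ f y}

/-- `(1/n) log x` as an extended real number. -/
noncomputable def expRate (n : ℕ) (x : ℝ≥0∞) : EReal :=
  (((n : ℝ)⁻¹ : ℝ) : EReal) * ENNReal.log x

/-- The action `W_n = -(1/n) log (dP/dQ)`. -/
noncomputable def action {Λ : Type*} [MeasurableSpace Λ]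
    (P Q : Measure Λ) (n : ℕ) (x : Λ) : ℝ :=
  -(n : ℝ)⁻¹ * Real.log ((P.rnDeriv Q) x).toReal

/-!
Along `Q_n` the density of `P_n` is `e^{-n W_n}`, so the rate functions satisfy the fluctuation
relation `J_P = w + J_Q`, and Varadhan's lemma gives the second moment the rate
`V = inf (2w + J_Q)` over `closure B`. By contraction `I_P(B) = inf (w + J_Q)`, and this infimum is
attained at some `(m, w)` because `J_P` is good. If `V = 2 I_P(B)`, then
`2w + 2 J_Q(m, w) ≤ 2w + J_Q(m, w)`, so the minimizer is a zero of `J_Q`; hence `w = w*`, which is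
typicality, and `V = 2w*`, which is steepness. Conversely, steepness is `2w* ≤ V`, typicality gives
`I_P(B) ≤ w*`, and `V ≤ 2 I_P(B)` always holds.
-/

open ExpGrowth

section ExponentialGrowth

lemma expRate_eq_log_div (n : ℕ) (x : ℝ≥0∞) : expRate n x = ENNReal.log x / n := by
  rw [expRate, EReal.coe_inv, EReal.coe_natCast, mul_comm, EReal.div_eq_inv_mul, mul_comm]

lemma limsup_expRate_eq_expGrowthSup (u : ℕ → ℝ≥0∞) :
    limsup (fun n ↦ expRate n (u n)) atTop = expGrowthSup u := by
  simp only [expRate_eq_log_div, expGrowthSup]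

lemma liminf_expRate_eq_expGrowthInf (u : ℕ → ℝ≥0∞) :
    liminf (fun n ↦ expRate n (u n)) atTop = expGrowthInf u := by
  simp only [expRate_eq_log_div, expGrowthInf]

lemma tendsto_expRate_of_le_expGrowthInf_of_expGrowthSup_le {u : ℕ → ℝ≥0∞} {a : EReal}
    (hinf : a ≤ expGrowthInf u) (hsup : expGrowthSup u ≤ a) :
    Tendsto (fun n ↦ expRate n (u n)) atTop (𝓝 a) :=
  tendsto_of_le_liminf_of_limsup_le (hinf.trans_eq (liminf_expRate_eq_expGrowthInf u).symm)
    ((limsup_expRate_eq_expGrowthSup u).trans_le hsup)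

lemma expGrowthSup_exp_mul_le (a : ℝ) (u : ℕ → ℝ≥0∞) :
    expGrowthSup (fun n ↦ EReal.exp (a * n) * u n) ≤ a + expGrowthSup u := by
  have hexp : expGrowthSup (fun n ↦ EReal.exp (a * n)) = a := expGrowthSup_exp
  have hmul := expGrowthSup_mul_le (u := fun n ↦ EReal.exp (a * n)) (v := u)
    (.inl <| hexp.trans_ne (EReal.coe_ne_bot a)) (.inl <| hexp.trans_ne (EReal.coe_ne_top a))
  rwa [hexp] at hmul

lemma add_expGrowthInf_le_expGrowthInf_exp_mul (a : ℝ) (u : ℕ → ℝ≥0∞) :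
    a + expGrowthInf u ≤ expGrowthInf (fun n ↦ EReal.exp (a * n) * u n) := by
  have hmul := le_expGrowthInf_mul (u := fun n ↦ EReal.exp (a * n)) (v := u)
  rwa [expGrowthInf_exp] at hmul

lemma expGrowthSup_setLIntegral_union_le {X : Type*} [MeasurableSpace X] {μ : ℕ → Measure X}
    {f : ℕ → X → ℝ≥0∞} {S T : Set X} :
    expGrowthSup (fun n ↦ ∫⁻ x in S ∪ T, f n x ∂μ n) ≤
      max (expGrowthSup fun n ↦ ∫⁻ x in S, f n x ∂μ n)
        (expGrowthSup fun n ↦ ∫⁻ x in T, f n x ∂μ n) :=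
  (expGrowthSup_monotone fun n ↦ lintegral_union_le (f n) S T).trans_eq expGrowthSup_add

end ExponentialGrowth

section GibbsWeight

variable {X : Type*}

/-- The Gibbs weight `e^{-nφ(x)}`, the density of an exponential change of measure with
potential `φ` at inverse temperature `n`. It takes values in `ℝ≥0∞` so that it can be used with
`lintegral` and `withDensity`. -/
noncomputable def gibbsWeight (φ : X → ℝ) (n : ℕ) (x : X) : ℝ≥0∞ :=
  EReal.exp ((-φ x : ℝ) * n)

variable {φ : X → ℝ} {n : ℕ} {x : X} {a : ℝ}

lemma gibbsWeight_eq_ofReal_exp : gibbsWeight φ n x = ENNReal.ofReal (Real.exp (-φ x * n)) := by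
  rw [gibbsWeight, ← EReal.coe_natCast, ← EReal.coe_mul, EReal.exp_coe]

lemma gibbsWeight_le_exp_of_le (h : a ≤ φ x) : gibbsWeight φ n x ≤ EReal.exp ((-a : ℝ) * n) := by
  rw [gibbsWeight]
  gcongr

lemma exp_le_gibbsWeight_of_le (h : φ x ≤ a) : EReal.exp ((-a : ℝ) * n) ≤ gibbsWeight φ n x := by
  rw [gibbsWeight]
  gcongr

lemma gibbsWeight_add (φ ψ : X → ℝ) (n : ℕ) (x : X) :
    gibbsWeight (φ + ψ) n x = gibbsWeight φ n x * gibbsWeight ψ n x := by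
  simp only [gibbsWeight_eq_ofReal_exp, Pi.add_apply]
  rw [← ENNReal.ofReal_mul (Real.exp_pos _).le, ← Real.exp_add]
  ring_nf

lemma gibbsWeight_neg (φ : X → ℝ) (n : ℕ) (x : X) :
    gibbsWeight (-φ) n x = (gibbsWeight φ n x)⁻¹ := by
  rw [gibbsWeight, gibbsWeight, ← EReal.exp_neg, Pi.neg_apply, EReal.coe_neg (-φ x), EReal.neg_mul]

lemma gibbsWeight_smul (c : ℝ) (φ : X → ℝ) (n : ℕ) (x : X) :
    gibbsWeight (c • φ) n x = gibbsWeight φ n x ^ c := by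
  rw [gibbsWeight, gibbsWeight, ← EReal.exp_mul, Pi.smul_apply, smul_eq_mul, ← EReal.coe_natCast]
  norm_cast
  ring_nf

variable [MeasurableSpace X]

lemma measurable_gibbsWeight (hφ : Measurable φ) (n : ℕ) : Measurable (gibbsWeight φ n) := by
  simp only [funext fun x ↦ gibbsWeight_eq_ofReal_exp (φ := φ) (n := n) (x := x)]
  fun_prop

lemma withDensity_gibbsWeight_neg {μ : Measure X} (hφ : Measurable φ) (n : ℕ) :
    (μ.withDensity (gibbsWeight φ n)).withDensity (gibbsWeight (-φ) n) = μ := by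
  simp only [funext (gibbsWeight_neg φ n)]
  refine withDensity_inv_same (measurable_gibbsWeight hφ n) (ae_of_all _ fun x ↦ ?_)
    (ae_of_all _ fun x ↦ ?_)
  · simp [gibbsWeight_eq_ofReal_exp, Real.exp_pos]
  · simp [gibbsWeight_eq_ofReal_exp]

variable {μ : Measure X} {S : Set X}

lemma setLIntegral_gibbsWeight_le (hS : MeasurableSet S) (ha : ∀ x ∈ S, a ≤ φ x) :
    ∫⁻ x in S, gibbsWeight φ n x ∂μ ≤ EReal.exp ((-a : ℝ) * n) * μ S := by
  rw [← setLIntegral_const]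
  exact setLIntegral_mono' hS fun x hx ↦ gibbsWeight_le_exp_of_le (ha x hx)

lemma le_setLIntegral_gibbsWeight (hS : MeasurableSet S) (ha : ∀ x ∈ S, φ x ≤ a) :
    EReal.exp ((-a : ℝ) * n) * μ S ≤ ∫⁻ x in S, gibbsWeight φ n x ∂μ := by
  rw [← setLIntegral_const]
  exact setLIntegral_mono' hS fun x hx ↦ exp_le_gibbsWeight_of_le (ha x hx)

lemma setLIntegral_gibbsWeight_add_le {ψ : X → ℝ} (hφ : Measurable φ) (hS : MeasurableSet S)
    (ha : ∀ x ∈ S, a ≤ ψ x) :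
    ∫⁻ x in S, gibbsWeight (φ + ψ) n x ∂μ ≤
      EReal.exp ((-a : ℝ) * n) * ∫⁻ x in S, gibbsWeight φ n x ∂μ := by
  rw [← lintegral_const_mul _ (measurable_gibbsWeight hφ n)]
  refine setLIntegral_mono' hS fun x hx ↦ ?_
  rw [gibbsWeight_add, mul_comm]
  gcongr
  exact gibbsWeight_le_exp_of_le (ha x hx)

end GibbsWeight

section RateFunction

lemma le_of_forall_isClosed_nhds_biInf_le {X β : Type*} [TopologicalSpace X]
    [RegularSpace X] [CompleteLinearOrder β] [DenselyOrdered β] {f : X → β} {x : X} {c : β}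
    (hf : LowerSemicontinuousAt f x) (h : ∀ F ∈ 𝓝 x, IsClosed F → ⨅ y ∈ F, f y ≤ c) :
    f x ≤ c := by
  refine le_of_forall_lt_imp_le_of_dense fun b hb ↦ ?_
  obtain ⟨F, hFx, hF, hFb⟩ := exists_mem_nhds_isClosed_subset (hf b hb)
  exact (le_iInf₂ fun y hy ↦ (hFb hy).le).trans (h F hFx hF)

variable {X : Type*} [TopologicalSpace X] {J : X → ℝ≥0∞}

lemma lowerSemicontinuous_coe_ereal (hJ : LowerSemicontinuous J) :
    LowerSemicontinuous fun x ↦ (J x : EReal) :=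
  continuous_coe_ennreal_ereal.comp_lowerSemicontinuous hJ EReal.coe_ennreal_strictMono.monotone

lemma coe_ereal_biInf {α : Type*} (S : Set α) (f : α → ℝ≥0∞) :
    ((⨅ x ∈ S, f x : ℝ≥0∞) : EReal) = ⨅ x ∈ S, (f x : EReal) := by
  refine le_antisymm
    (le_iInf₂ fun x hx ↦ EReal.coe_ennreal_le_coe_ennreal_iff.2 (iInf₂_le x hx)) ?_
  rw [← EReal.coe_toENNReal (le_iInf₂ fun x _ ↦ EReal.coe_ennreal_nonneg (f x)),
    EReal.coe_ennreal_le_coe_ennreal_iff]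
  refine le_iInf₂ fun x hx ↦ ?_
  rw [← EReal.toENNReal_coe (x := f x)]
  exact EReal.toENNReal_le_toENNReal (iInf₂_le x hx)

lemma IsGoodRate.exists_isMinOn (hJ : IsGoodRate J) {F : Set X} (hF : IsClosed F)
    (hne : F.Nonempty) : ∃ x ∈ F, IsMinOn J F x := by
  by_cases htop : ∀ y ∈ F, J y = ⊤
  · obtain ⟨x, hx⟩ := hne
    exact ⟨x, hx, fun y hy ↦ (htop y hy).ge.trans' le_top⟩
  push Not at htop
  obtain ⟨y, hyF, hy⟩ := htop
  obtain ⟨x, ⟨hxy, hxF⟩, hmin⟩ := LowerSemicontinuousOn.exists_isMinOn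
    (s := {z | J z ≤ J y} ∩ F) ⟨y, le_refl (J y), hyF⟩ ((hJ.2 _ hy).inter_right hF)
    (hJ.1.lowerSemicontinuousOn _)
  refine ⟨x, hxF, fun z hz ↦ ?_⟩
  by_cases hzy : J z ≤ J y
  · exact hmin ⟨hzy, hz⟩
  · exact hxy.trans (not_le.1 hzy).le

end RateFunction

namespace SatisfiesLDP

section Bounds

variable {X : Type*} [TopologicalSpace X] [MeasurableSpace X] {μ : ℕ → Measure X} {J : X → ℝ≥0∞}

lemma expGrowthSup_le (hμ : SatisfiesLDP μ J) {F : Set X} (hF : IsClosed F) :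
    expGrowthSup (fun n ↦ μ n F) ≤ -⨅ x ∈ F, (J x : EReal) :=
  (limsup_expRate_eq_expGrowthSup _).symm.trans_le (hμ.1 F hF)

lemma le_expGrowthInf (hμ : SatisfiesLDP μ J) {G : Set X} (hG : IsOpen G) :
    -⨅ x ∈ G, (J x : EReal) ≤ expGrowthInf (fun n ↦ μ n G) :=
  (hμ.2 G hG).trans_eq (liminf_expRate_eq_expGrowthInf _)

lemma neg_le_expGrowthInf_of_mem (hμ : SatisfiesLDP μ J) {G : Set X} (hG : IsOpen G) {x : X}
    (hx : x ∈ G) : -(J x : EReal) ≤ expGrowthInf (fun n ↦ μ n G) :=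
  (EReal.neg_le_neg_iff.2 (iInf₂_le x hx)).trans (hμ.le_expGrowthInf hG)

lemma expGrowthSup_nonpos (hμ : SatisfiesLDP μ J) {F : Set X} (hF : IsClosed F) :
    expGrowthSup (fun n ↦ μ n F) ≤ 0 :=
  (hμ.expGrowthSup_le hF).trans <|
    EReal.neg_le_zero.2 <| le_iInf₂ fun _ _ ↦ EReal.coe_ennreal_nonneg _

lemma rate_le_of_forall_isOpen [RegularSpace X] (hμ : SatisfiesLDP μ J)
    (hJ : LowerSemicontinuous J) {x : X} {c : EReal}
    (h : ∀ G, IsOpen G → x ∈ G → -c ≤ expGrowthSup (fun n ↦ μ n G)) : J x ≤ c := by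
  refine le_of_forall_isClosed_nhds_biInf_le (f := fun y ↦ (J y : EReal))
    (lowerSemicontinuous_coe_ereal hJ x) fun F hFx hF ↦ ?_
  refine EReal.neg_le_neg_iff.1 ((h _ isOpen_interior (mem_interior_iff_mem_nhds.2 hFx)).trans ?_)
  exact (expGrowthSup_monotone fun n ↦ measure_mono interior_subset).trans (hμ.expGrowthSup_le hF)

end Bounds

section Varadhan

variable {X : Type*} [TopologicalSpace X] [MeasurableSpace X] [OpensMeasurableSpace X]
  {μ : ℕ → Measure X} {J : X → ℝ≥0∞} {φ : X → ℝ}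

theorem neg_add_le_expGrowthInf_setLIntegral_gibbsWeight (hμ : SatisfiesLDP μ J)
    (hφ : Continuous φ) {G : Set X} (hG : IsOpen G) {x : X} (hx : x ∈ G) :
    -(φ x + J x : EReal) ≤ expGrowthInf (fun n ↦ ∫⁻ y in G, gibbsWeight φ n y ∂μ n) := by
  rw [EReal.neg_le, ← EReal.sub_le_iff_le_add (.inr (EReal.coe_ne_top _))
    (.inr (EReal.coe_ne_bot _)), ← EReal.le_of_forall_lt_iff_le]
  refine fun a ha ↦ EReal.sub_le_of_le_add (EReal.neg_le.1 ?_)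
  rw [EReal.neg_add (.inl (EReal.coe_ne_bot a)) (.inl (EReal.coe_ne_top a)), sub_eq_add_neg]
  have hGa : IsOpen (G ∩ {y | φ y < a}) := hG.inter (isOpen_lt hφ continuous_const)
  calc -(a : EReal) + -(J x : EReal)
      ≤ (-a : ℝ) + expGrowthInf (fun n ↦ μ n (G ∩ {y | φ y < a})) :=
        add_le_add_right (hμ.neg_le_expGrowthInf_of_mem hGa ⟨hx, EReal.coe_lt_coe_iff.1 ha⟩) _
    _ ≤ expGrowthInf (fun n ↦ EReal.exp ((-a : ℝ) * n) * μ n (G ∩ {y | φ y < a})) :=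
        add_expGrowthInf_le_expGrowthInf_exp_mul _ _
    _ ≤ expGrowthInf (fun n ↦ ∫⁻ y in G, gibbsWeight φ n y ∂μ n) :=
        expGrowthInf_monotone fun n ↦
          (le_setLIntegral_gibbsWeight hGa.measurableSet fun y hy ↦ hy.2.le).trans
            (lintegral_mono_set inter_subset_left)

variable {F : Set X} {v : ℝ}

lemma expGrowthSup_setLIntegral_gibbsWeight_slab_le (hμ : SatisfiesLDP μ J) (hφ : Continuous φ)
    (hF : IsClosed F) (hv : ∀ x ∈ F, (v : EReal) ≤ φ x + J x) (a b : ℝ) :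
    expGrowthSup (fun n ↦ ∫⁻ x in F ∩ φ ⁻¹' Icc a b, gibbsWeight φ n x ∂μ n) ≤
      (b - a - v : ℝ) := by
  have hFab : IsClosed (F ∩ φ ⁻¹' Icc a b) := hF.inter (isClosed_Icc.preimage hφ)
  have hJ : ((v - b : ℝ) : EReal) ≤ ⨅ x ∈ F ∩ φ ⁻¹' Icc a b, (J x : EReal) := by
    rw [EReal.coe_sub]
    refine le_iInf₂ fun x hx ↦ EReal.sub_le_of_le_add' ((hv x hx.1).trans ?_)
    gcongr
    exact hx.2.2
  calc expGrowthSup (fun n ↦ ∫⁻ x in F ∩ φ ⁻¹' Icc a b, gibbsWeight φ n x ∂μ n)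
      ≤ expGrowthSup (fun n ↦ EReal.exp ((-a : ℝ) * n) * μ n (F ∩ φ ⁻¹' Icc a b)) :=
        expGrowthSup_monotone fun n ↦
          setLIntegral_gibbsWeight_le hFab.measurableSet fun x hx ↦ hx.2.1
    _ ≤ (-a : ℝ) + expGrowthSup (fun n ↦ μ n (F ∩ φ ⁻¹' Icc a b)) := expGrowthSup_exp_mul_le _ _
    _ ≤ (-a : ℝ) + -((v - b : ℝ) : EReal) :=
        add_le_add_right ((hμ.expGrowthSup_le hFab).trans (EReal.neg_le_neg_iff.2 hJ)) _
    _ = (b - a - v : ℝ) := by norm_cast; ring_nf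

lemma expGrowthSup_setLIntegral_gibbsWeight_Ici_le (hμ : SatisfiesLDP μ J) (hφ : Continuous φ)
    (hF : IsClosed F) (a : ℝ) :
    expGrowthSup (fun n ↦ ∫⁻ x in F ∩ φ ⁻¹' Ici a, gibbsWeight φ n x ∂μ n) ≤ (-a : ℝ) := by
  have hFa : IsClosed (F ∩ φ ⁻¹' Ici a) := hF.inter (isClosed_Ici.preimage hφ)
  calc expGrowthSup (fun n ↦ ∫⁻ x in F ∩ φ ⁻¹' Ici a, gibbsWeight φ n x ∂μ n)
      ≤ expGrowthSup (fun n ↦ EReal.exp ((-a : ℝ) * n) * μ n (F ∩ φ ⁻¹' Ici a)) :=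
        expGrowthSup_monotone fun n ↦
          setLIntegral_gibbsWeight_le hFa.measurableSet fun x hx ↦ hx.2
    _ ≤ (-a : ℝ) + expGrowthSup (fun n ↦ μ n (F ∩ φ ⁻¹' Ici a)) := expGrowthSup_exp_mul_le _ _
    _ ≤ (-a : ℝ) + 0 := add_le_add_right (hμ.expGrowthSup_nonpos hFa) _
    _ = (-a : ℝ) := add_zero _

/- `e^{-nφ} = e^{nηφ} e^{-n(1+η)φ}`, and the first factor is at most `e^{nηa}` where `φ ≤ a`. -/
lemma exists_expGrowthSup_setLIntegral_gibbsWeight_Iic_le (hφ : Continuous φ) (hF : IsClosed F)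
    {η : ℝ} (hη : 0 < η)
    (hmom : expGrowthSup (fun n ↦ ∫⁻ x in F, gibbsWeight ((1 + η) • φ) n x ∂μ n) < ⊤) (c : ℝ) :
    ∃ a : ℝ, expGrowthSup (fun n ↦ ∫⁻ x in F ∩ φ ⁻¹' Iic a, gibbsWeight φ n x ∂μ n) ≤ c := by
  obtain ⟨C, hC, -⟩ := EReal.exists_between_coe_real hmom
  refine ⟨(c - C) / η, ?_⟩
  set a := (c - C) / η with ha
  have hFa : IsClosed (F ∩ φ ⁻¹' Iic a) := hF.inter (isClosed_Iic.preimage hφ)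
  have hsplit : φ = (1 + η) • φ + (-η) • φ := by module
  calc expGrowthSup (fun n ↦ ∫⁻ x in F ∩ φ ⁻¹' Iic a, gibbsWeight φ n x ∂μ n)
      ≤ expGrowthSup (fun n ↦ EReal.exp ((-(-η * a) : ℝ) * n) *
          ∫⁻ x in F, gibbsWeight ((1 + η) • φ) n x ∂μ n) := by
        refine expGrowthSup_monotone fun n ↦ ?_
        nth_rw 2 [hsplit]
        refine (setLIntegral_gibbsWeight_add_le (hφ.measurable.const_smul _) hFa.measurableSet
          fun x hx ↦ mul_le_mul_of_nonpos_left hx.2 (neg_nonpos.2 hη.le)).trans ?_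
        gcongr
        exact inter_subset_left
    _ ≤ (-(-η * a) : ℝ) + expGrowthSup (fun n ↦ ∫⁻ x in F, gibbsWeight ((1 + η) • φ) n x ∂μ n) :=
        expGrowthSup_exp_mul_le _ _
    _ ≤ (-(-η * a) : ℝ) + (C : EReal) := add_le_add_right hC.le _
    _ = c := by
        norm_cast
        rw [ha]
        field_simp
        ring

lemma expGrowthSup_setLIntegral_gibbsWeight_Icc_le (hμ : SatisfiesLDP μ J) (hφ : Continuous φ)
    (hF : IsClosed F) (hv : ∀ x ∈ F, (v : EReal) ≤ φ x + J x) {c : ℝ} (hc : c < v) (a b : ℝ) :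
    expGrowthSup (fun n ↦ ∫⁻ x in F ∩ φ ⁻¹' Icc a b, gibbsWeight φ n x ∂μ n) ≤ (-c : ℝ) := by
  refine isCompact_Icc.induction_on
    (p := fun S ↦ expGrowthSup (fun n ↦ ∫⁻ x in F ∩ φ ⁻¹' S, gibbsWeight φ n x ∂μ n) ≤ (-c : ℝ))
    ?_ (fun S T hST hT ↦ ?_) (fun S T hS hT ↦ ?_) fun t _ ↦ ?_
  · simp only [preimage_empty, inter_empty, Measure.restrict_empty, lintegral_zero_measure]
    exact expGrowthSup_zero.trans_le bot_le
  · refine (expGrowthSup_monotone fun n ↦ lintegral_mono_set ?_).trans hT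
    gcongr
  · simp only [preimage_union, inter_union_distrib_left]
    exact expGrowthSup_setLIntegral_union_le.trans (max_le hS hT)
  · refine ⟨Icc (t - (v - c) / 2) (t + (v - c) / 2),
      mem_nhdsWithin_of_mem_nhds (Icc_mem_nhds (by linarith) (by linarith)), ?_⟩
    refine (hμ.expGrowthSup_setLIntegral_gibbsWeight_slab_le hφ hF hv _ _).trans_eq ?_
    ring_nf

theorem expGrowthSup_setLIntegral_gibbsWeight_le (hμ : SatisfiesLDP μ J) (hφ : Continuous φ)
    (hF : IsClosed F) {η : ℝ} (hη : 0 < η)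
    (hmom : expGrowthSup (fun n ↦ ∫⁻ x in F, gibbsWeight ((1 + η) • φ) n x ∂μ n) < ⊤) :
    expGrowthSup (fun n ↦ ∫⁻ x in F, gibbsWeight φ n x ∂μ n) ≤ -⨅ x ∈ F, (φ x + J x : EReal) := by
  rw [EReal.le_neg, ← EReal.ge_of_forall_gt_iff_ge]
  refine fun c hc ↦ EReal.le_neg.1 ?_
  obtain ⟨v, hcv, hv⟩ := EReal.exists_between_coe_real hc
  have hφJ : ∀ x ∈ F, (v : EReal) ≤ φ x + J x := fun x hx ↦ hv.le.trans (iInf₂_le x hx)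
  obtain ⟨a, ha⟩ := exists_expGrowthSup_setLIntegral_gibbsWeight_Iic_le hφ hF hη hmom (-c)
  have hcover : F = F ∩ φ ⁻¹' Iic a ∪ F ∩ φ ⁻¹' Icc a c ∪ F ∩ φ ⁻¹' Ici c := by
    rw [← inter_union_distrib_left, ← inter_union_distrib_left, ← preimage_union, ← preimage_union,
      eq_comm, inter_eq_left]
    intro x _
    simp only [mem_preimage, mem_union, mem_Iic, mem_Icc, mem_Ici]
    grind
  rw [hcover]
  refine expGrowthSup_setLIntegral_union_le.trans (max_le ?_ ?_)
  · exact expGrowthSup_setLIntegral_union_le.trans <| max_le ha <|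
      hμ.expGrowthSup_setLIntegral_gibbsWeight_Icc_le hφ hF hφJ (EReal.coe_lt_coe_iff.1 hcv) a c
  · exact hμ.expGrowthSup_setLIntegral_gibbsWeight_Ici_le hφ hF c

theorem tendsto_neg_expRate_setLIntegral_gibbsWeight (hμ : SatisfiesLDP μ J) (hφ : Continuous φ)
    {A : Set X} {η : ℝ} (hη : 0 < η)
    (hmom : expGrowthSup (fun n ↦ ∫⁻ x in closure A, gibbsWeight ((1 + η) • φ) n x ∂μ n) < ⊤)
    (hA : ⨅ x ∈ interior A, (φ x + J x : EReal) = ⨅ x ∈ closure A, (φ x + J x : EReal)) :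
    Tendsto (fun n ↦ -expRate n (∫⁻ x in A, gibbsWeight φ n x ∂μ n)) atTop
      (𝓝 (⨅ x ∈ closure A, (φ x + J x : EReal))) := by
  have hlower : -⨅ x ∈ closure A, (φ x + J x : EReal) ≤
      expGrowthInf (fun n ↦ ∫⁻ x in A, gibbsWeight φ n x ∂μ n) := by
    rw [← hA, EReal.neg_le]
    refine le_iInf₂ fun x hx ↦ EReal.neg_le.1 ?_
    exact (hμ.neg_add_le_expGrowthInf_setLIntegral_gibbsWeight hφ isOpen_interior hx).trans
      (expGrowthInf_monotone fun n ↦ lintegral_mono_set interior_subset)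
  have hupper : expGrowthSup (fun n ↦ ∫⁻ x in A, gibbsWeight φ n x ∂μ n) ≤
      -⨅ x ∈ closure A, (φ x + J x : EReal) := by
    refine le_trans ?_ (hμ.expGrowthSup_setLIntegral_gibbsWeight_le hφ isClosed_closure hη hmom)
    exact expGrowthSup_monotone fun n ↦ lintegral_mono_set subset_closure
  have hlim := tendsto_expRate_of_le_expGrowthInf_of_expGrowthSup_le hlower hupper
  rw [← neg_neg (⨅ x ∈ closure A, (φ x + J x : EReal))]
  exact hlim.neg

end Varadhan

section Tilting

variable {X : Type*} [TopologicalSpace X] [RegularSpace X] [MeasurableSpace X]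
  [OpensMeasurableSpace X] {μ ν : ℕ → Measure X} {J J' : X → ℝ≥0∞} {φ : X → ℝ}

lemma rate_le_add_of_withDensity (hμ : SatisfiesLDP μ J) (hν : SatisfiesLDP ν J')
    (hJ' : LowerSemicontinuous J') (hφ : Continuous φ)
    (h : ∀ᶠ n in atTop, ν n = (μ n).withDensity (gibbsWeight φ n)) (x : X) :
    (J' x : EReal) ≤ φ x + J x := by
  refine hν.rate_le_of_forall_isOpen hJ' fun G hG hx ↦ ?_
  calc -(φ x + J x : EReal)
      ≤ expGrowthInf (fun n ↦ ∫⁻ y in G, gibbsWeight φ n y ∂μ n) :=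
        hμ.neg_add_le_expGrowthInf_setLIntegral_gibbsWeight hφ hG hx
    _ = expGrowthInf (fun n ↦ ν n G) := by
        refine expGrowthInf_congr (h.mono fun n hn ↦ ?_)
        simp only [hn, withDensity_apply _ hG.measurableSet]
    _ ≤ expGrowthSup (fun n ↦ ν n G) := expGrowthInf_le_expGrowthSup

theorem rate_eq_add_of_withDensity (hμ : SatisfiesLDP μ J) (hν : SatisfiesLDP ν J')
    (hJ : LowerSemicontinuous J) (hJ' : LowerSemicontinuous J') (hφ : Continuous φ)
    (h : ∀ᶠ n in atTop, ν n = (μ n).withDensity (gibbsWeight φ n)) (x : X) :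
    (J' x : EReal) = φ x + J x := by
  refine le_antisymm (hμ.rate_le_add_of_withDensity hν hJ' hφ h x) ?_
  have hneg : ∀ᶠ n in atTop, μ n = (ν n).withDensity (gibbsWeight (-φ) n) :=
    h.mono fun n hn ↦ by rw [hn, withDensity_gibbsWeight_neg hφ.measurable]
  have hle := hν.rate_le_add_of_withDensity hμ hJ hφ.neg hneg x
  rw [Pi.neg_apply, EReal.coe_neg, add_comm, ← sub_eq_add_neg] at hle
  exact (add_comm _ _).trans_le (EReal.add_le_of_le_sub hle)

end Tilting

section Contraction

variable {X Y : Type*} [TopologicalSpace X] [MeasurableSpace X] [OpensMeasurableSpace X]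
  [TopologicalSpace Y] [MeasurableSpace Y] [BorelSpace Y]
  {μ : ℕ → Measure X} {J : X → ℝ≥0∞} {I : Y → ℝ≥0∞} {f : X → Y}

lemma rate_map_le [RegularSpace Y] (hμ : SatisfiesLDP μ J) (hf : Continuous f)
    (hν : SatisfiesLDP (fun n ↦ (μ n).map f) I) (hI : LowerSemicontinuous I) (x : X) :
    I (f x) ≤ J x := by
  refine EReal.coe_ennreal_le_coe_ennreal_iff.1 <|
    hν.rate_le_of_forall_isOpen hI fun G hG hx ↦ ?_
  simp only [Measure.map_apply hf.measurable hG.measurableSet]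
  exact (hμ.neg_le_expGrowthInf_of_mem (hG.preimage hf) hx).trans expGrowthInf_le_expGrowthSup

lemma biInf_preimage_closure_le_biInf_interior (hμ : SatisfiesLDP μ J) (hf : Continuous f)
    (hν : SatisfiesLDP (fun n ↦ (μ n).map f) I) (B : Set Y) :
    ⨅ x ∈ f ⁻¹' closure B, J x ≤ ⨅ y ∈ interior B, I y := by
  rw [← EReal.coe_ennreal_le_coe_ennreal_iff, coe_ereal_biInf, coe_ereal_biInf,
    ← EReal.neg_le_neg_iff]
  calc -⨅ y ∈ interior B, (I y : EReal)
      ≤ expGrowthInf (fun n ↦ (μ n).map f (interior B)) := hν.le_expGrowthInf isOpen_interior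
    _ ≤ expGrowthSup (fun n ↦ μ n (f ⁻¹' closure B)) := by
        refine expGrowthInf_le_expGrowthSup.trans (expGrowthSup_monotone fun n ↦ ?_)
        rw [Measure.map_apply hf.measurable isOpen_interior.measurableSet]
        exact measure_mono (preimage_mono interior_subset_closure)
    _ ≤ -⨅ x ∈ f ⁻¹' closure B, (J x : EReal) := hμ.expGrowthSup_le (isClosed_closure.preimage hf)

lemma exists_rate_le_biInf_interior (hμ : SatisfiesLDP μ J) (hJ : IsGoodRate J) (hf : Continuous f)
    (hν : SatisfiesLDP (fun n ↦ (μ n).map f) I) {B : Set Y} (hB : ⨅ y ∈ interior B, I y ≠ ⊤) :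
    ∃ x ∈ f ⁻¹' closure B, J x ≤ ⨅ y ∈ interior B, I y := by
  have hle := hμ.biInf_preimage_closure_le_biInf_interior hf hν B
  have hne : (f ⁻¹' closure B).Nonempty := by
    by_contra hempty
    rw [not_nonempty_iff_eq_empty.1 hempty, iInf_emptyset] at hle
    exact hB (top_le_iff.1 hle)
  obtain ⟨x, hx, hmin⟩ := hJ.exists_isMinOn (isClosed_closure.preimage hf) hne
  exact ⟨x, hx, (le_iInf₂ fun y hy ↦ hmin hy).trans hle⟩

end Contraction

end SatisfiesLDP

section Action

variable {Λ : Type*} [MeasurableSpace Λ] {P Q : Measure Λ} {n : ℕ}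

lemma measurable_action (P Q : Measure Λ) (n : ℕ) : Measurable (action P Q n) :=
  (P.measurable_rnDeriv Q).ennreal_toReal.log.const_mul _

lemma rnDeriv_ae_eq_gibbsWeight_action [SigmaFinite P] [SigmaFinite Q] (hQP : Q ≪ P)
    (hn : n ≠ 0) : P.rnDeriv Q =ᵐ[Q] gibbsWeight (action P Q n) n := by
  filter_upwards [Measure.rnDeriv_pos' hQP, P.rnDeriv_lt_top Q] with x hpos hfin
  have hn' : (n : ℝ) ≠ 0 := Nat.cast_ne_zero.2 hn
  have hexp : -action P Q n x * n = Real.log (P.rnDeriv Q x).toReal := by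
    rw [action]
    field_simp
  rw [gibbsWeight_eq_ofReal_exp, hexp, Real.exp_log (ENNReal.toReal_pos hpos.ne' hfin.ne),
    ENNReal.ofReal_toReal hfin.ne]

variable {X : Type*} [MeasurableSpace X] {M : Λ → X}

lemma setLIntegral_rnDeriv_rpow [SigmaFinite P] [SigmaFinite Q] (hQP : Q ≪ P) (hM : Measurable M)
    (hn : n ≠ 0) {S : Set (X × ℝ)} (hS : MeasurableSet S) (r : ℝ) :
    ∫⁻ x in (fun x ↦ (M x, action P Q n x)) ⁻¹' S, P.rnDeriv Q x ^ r ∂Q =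
      ∫⁻ p in S, gibbsWeight (r • Prod.snd) n p ∂Q.map fun x ↦ (M x, action P Q n x) := by
  rw [setLIntegral_map hS (measurable_gibbsWeight (measurable_snd.const_smul r) n)
    (hM.prodMk (measurable_action P Q n))]
  refine lintegral_congr_ae (ae_restrict_of_ae ?_)
  filter_upwards [rnDeriv_ae_eq_gibbsWeight_action hQP hn] with x hx
  rw [hx, gibbsWeight_smul]
  rfl

lemma map_prodMk_action_eq_withDensity [SigmaFinite P] [SigmaFinite Q] (hPQ : P ≪ Q) (hQP : Q ≪ P)
    (hM : Measurable M) (hn : n ≠ 0) :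
    P.map (fun x ↦ (M x, action P Q n x)) =
      (Q.map fun x ↦ (M x, action P Q n x)).withDensity (gibbsWeight Prod.snd n) := by
  ext S hS
  have hmeas : Measurable fun x ↦ (M x, action P Q n x) := hM.prodMk (measurable_action P Q n)
  have hmoment := setLIntegral_rnDeriv_rpow hQP hM hn hS 1
  simp only [ENNReal.rpow_one, one_smul] at hmoment
  rw [withDensity_apply _ hS, ← hmoment, Measure.setLIntegral_rnDeriv hPQ,
    Measure.map_apply hmeas hS]

end Action

section LikelihoodRatio

variable {X : Type*} [TopologicalSpace X] [MeasurableSpace X] [OpensMeasurableSpace X]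
  {Λ : ℕ → Type*} [∀ n, MeasurableSpace (Λ n)] {P Q : ∀ n, Measure (Λ n)}
  [∀ n, SigmaFinite (P n)] [∀ n, SigmaFinite (Q n)] {M : ∀ n, Λ n → X} {J_P J_Q : X × ℝ → ℝ≥0∞}

theorem fluctuation_relation [RegularSpace X] (hPQ : ∀ n, P n ≪ Q n) (hQP : ∀ n, Q n ≪ P n)
    (hM : ∀ n, Measurable (M n))
    (hP : SatisfiesLDP (fun n ↦ (P n).map fun x ↦ (M n x, action (P n) (Q n) n x)) J_P)
    (hQ : SatisfiesLDP (fun n ↦ (Q n).map fun x ↦ (M n x, action (P n) (Q n) n x)) J_Q)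
    (hJ_P : LowerSemicontinuous J_P) (hJ_Q : LowerSemicontinuous J_Q) (m : X) (w : ℝ) :
    (J_P (m, w) : EReal) = w + J_Q (m, w) :=
  hQ.rate_eq_add_of_withDensity hP hJ_Q hJ_P continuous_snd
    ((eventually_ne_atTop 0).mono fun n hn ↦
      map_prodMk_action_eq_withDensity (hPQ n) (hQP n) (hM n) hn) (m, w)

theorem tendsto_neg_expRate_setLIntegral_rnDeriv_rpow (hQP : ∀ n, Q n ≪ P n)
    (hM : ∀ n, Measurable (M n))
    (hQ : SatisfiesLDP (fun n ↦ (Q n).map fun x ↦ (M n x, action (P n) (Q n) n x)) J_Q)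
    {B : Set X} (hB : MeasurableSet B) {k δ : ℝ} (hk : 0 < k) (hδ : 0 < δ)
    (hmom : limsup (fun n ↦ expRate n
      (∫⁻ x in {x | M n x ∈ closure B}, (P n).rnDeriv (Q n) x ^ (k + δ) ∂Q n)) atTop < ⊤)
    (hBgood : ⨅ m ∈ interior B, ⨅ w : ℝ, (((k * w : ℝ) : EReal) + J_Q (m, w)) =
      ⨅ m ∈ closure B, ⨅ w : ℝ, (((k * w : ℝ) : EReal) + J_Q (m, w))) :
    Tendsto (fun n ↦ -expRate n (∫⁻ x in {x | M n x ∈ B}, (P n).rnDeriv (Q n) x ^ k ∂Q n)) atTop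
      (𝓝 (⨅ m ∈ closure B, ⨅ w : ℝ, (((k * w : ℝ) : EReal) + J_Q (m, w)))) := by
  have hmoment (S : Set X) (hS : MeasurableSet S) (r : ℝ) : ∀ᶠ n in atTop,
      ∫⁻ p in S ×ˢ univ, gibbsWeight (r • Prod.snd) n p
          ∂(Q n).map (fun x ↦ (M n x, action (P n) (Q n) n x)) =
        ∫⁻ x in {x | M n x ∈ S}, (P n).rnDeriv (Q n) x ^ r ∂Q n := by
    filter_upwards [eventually_ne_atTop 0] with n hn
    rw [← setLIntegral_rnDeriv_rpow (hQP n) (hM n) hn (hS.prod .univ), mk_preimage_prod,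
      preimage_univ, inter_univ]
    rfl
  have hmom' : expGrowthSup (fun n ↦ ∫⁻ p in closure (B ×ˢ univ),
      gibbsWeight ((1 + δ / k) • k • Prod.snd) n p
        ∂(Q n).map (fun x ↦ (M n x, action (P n) (Q n) n x))) < ⊤ := by
    have hexponent : (1 + δ / k) * k = k + δ := by field_simp
    rw [smul_smul, hexponent, closure_prod_eq, closure_univ,
      expGrowthSup_congr (hmoment _ isClosed_closure.measurableSet _)]
    rwa [limsup_expRate_eq_expGrowthSup] at hmom
  have hlim := hQ.tendsto_neg_expRate_setLIntegral_gibbsWeight (continuous_snd.const_smul k)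
    (div_pos hδ hk) hmom'
  simp only [interior_prod_eq, closure_prod_eq, interior_univ, closure_univ, biInf_prod,
    mem_univ, iInf_pos, Pi.smul_apply, smul_eq_mul] at hlim
  refine (hlim hBgood).congr' ((hmoment B hB k).mono fun n hn ↦ ?_)
  rw [hn]

end LikelihoodRatio

section Variational

variable {X : Type*} {J : X × ℝ → ℝ≥0∞} {S : Set X} {k wstar : ℝ}

lemma neg_mem_subdiff_biInf_iff (hzero : ⨅ m ∈ S, J (m, wstar) = 0) :
    -k ∈ Subdiff (fun w ↦ ⨅ m ∈ S, (J (m, w) : EReal)) wstar ↔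
      ((k * wstar : ℝ) : EReal) ≤ ⨅ m ∈ S, ⨅ w : ℝ, (((k * w : ℝ) : EReal) + J (m, w)) := by
  have hline (m : X) (w : ℝ) : ((-k * (w - wstar) : ℝ) : EReal) ≤ J (m, w) ↔
      ((k * wstar : ℝ) : EReal) ≤ ((k * w : ℝ) : EReal) + J (m, w) := by
    rw [show -k * (w - wstar) = k * wstar - k * w by ring, EReal.coe_sub,
      EReal.sub_le_iff_le_add (.inl (EReal.coe_ne_bot _)) (.inl (EReal.coe_ne_top _)), add_comm]
  simp only [Subdiff, mem_ofPred_eq, ← coe_ereal_biInf S fun m ↦ J (m, wstar), hzero,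
    EReal.coe_ennreal_zero, zero_add, le_iInf_iff, hline]
  exact ⟨fun h m hm w ↦ h w m hm, fun h w m hm ↦ h m hm w⟩

variable {i : ℝ}

lemma exists_mem_coe_eq_of_exists_add_le (hmin : ∃ m ∈ S, ∃ w : ℝ, (w : EReal) + J (m, w) ≤ i) :
    ∃ m ∈ S, ∃ w j : ℝ, 0 ≤ j ∧ (J (m, w) : EReal) = j ∧ w + j ≤ i := by
  obtain ⟨m, hm, w, hw⟩ := hmin
  have hfin : J (m, w) ≠ ⊤ := fun htop ↦ by simp [htop] at hw
  have hj : (J (m, w) : EReal) = (J (m, w)).toReal := (EReal.coe_ennreal_toReal hfin).symm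
  rw [hj] at hw
  exact ⟨m, hm, w, (J (m, w)).toReal, ENNReal.toReal_nonneg, hj, mod_cast hw⟩

theorem biInf_mul_add_eq_mul_iff (hk : 1 < k)
    (hle : ∀ m ∈ S, ∀ w : ℝ, (i : EReal) ≤ w + J (m, w))
    (hmin : ∃ m ∈ S, ∃ w : ℝ, (w : EReal) + J (m, w) ≤ i)
    (hwstar : ∀ m w, J (m, w) = 0 → w = wstar) :
    ⨅ m ∈ S, ⨅ w : ℝ, (((k * w : ℝ) : EReal) + J (m, w)) = (k * i : ℝ) ↔
      ⨅ m ∈ S, J (m, wstar) = 0 ∧ -k ∈ Subdiff (fun w ↦ ⨅ m ∈ S, (J (m, w) : EReal)) wstar := by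
  obtain ⟨m, hm, w, j, hj_nonneg, hj, hwj⟩ := exists_mem_coe_eq_of_exists_add_le hmin
  have hi : i ≤ w + j := by
    have hle_mw := hle m hm w
    rw [hj] at hle_mw
    exact_mod_cast hle_mw
  have hV : ⨅ m ∈ S, ⨅ w : ℝ, (((k * w : ℝ) : EReal) + J (m, w)) ≤ (k * w + j : ℝ) :=
    (iInf₂_le m hm).trans <| (iInf_le _ w).trans_eq <| by rw [hj]; rfl
  constructor
  · intro hVi
    rw [hVi, EReal.coe_le_coe_iff] at hV
    have hj_zero : j = 0 := by nlinarith
    have hJ : J (m, w) = 0 := by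
      rwa [hj_zero, EReal.coe_zero, EReal.coe_ennreal_eq_zero] at hj
    obtain rfl : w = wstar := hwstar m w hJ
    have hi_eq : i = w := by
      linarith
    have hzero : ⨅ m ∈ S, J (m, w) = 0 := le_antisymm ((iInf₂_le m hm).trans_eq hJ) zero_le
    exact ⟨hzero, (neg_mem_subdiff_biInf_iff hzero).2 (by rw [hVi, hi_eq])⟩
  · rintro ⟨hzero, hsteep⟩
    have hi_le : i ≤ wstar := by
      have hsub : ((i - wstar : ℝ) : EReal) ≤ ⨅ m ∈ S, (J (m, wstar) : EReal) :=
        le_iInf₂ fun m hm ↦ EReal.sub_le_of_le_add' (hle m hm wstar)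
      rw [← coe_ereal_biInf, hzero, EReal.coe_ennreal_zero] at hsub
      exact sub_nonpos.1 (mod_cast hsub)
    refine le_antisymm (hV.trans (EReal.coe_le_coe_iff.2 ?_)) ?_
    · nlinarith 
    · refine le_trans (EReal.coe_le_coe_iff.2 ?_) ((neg_mem_subdiff_biInf_iff hzero).1 hsteep)
      gcongr

end Variational

section Efficiency

variable {X : Type*} [TopologicalSpace X] [RegularSpace X] [MeasurableSpace X] [BorelSpace X]
  {Λ : ℕ → Type*} [∀ n, MeasurableSpace (Λ n)]

theorem asymptotic_efficiency_characterization_general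
    (P Q : ∀ n, Measure (Λ n)) [∀ n, SigmaFinite (P n)] [∀ n, SigmaFinite (Q n)]
    (habs : ∀ n, P n ≪ Q n ∧ Q n ≪ P n)
    (M : ∀ n, Λ n → X) (hM : ∀ n, Measurable (M n)) (B : Set X) (hB : MeasurableSet B)
    (I_P : X → ℝ≥0∞) (hLDP_M : SatisfiesLDP (fun n ↦ (P n).map (M n)) I_P)
    (hI_P : LowerSemicontinuous I_P)
    (hIPB : ⨅ m ∈ interior B, I_P m = ⨅ m ∈ closure B, I_P m)
    (hIPBfin : ⨅ m ∈ closure B, I_P m ≠ ⊤)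
    (δ : ℝ) (hδ : 0 < δ)
    (hmom : limsup (fun n ↦ expRate n
      (∫⁻ x in {x | M n x ∈ closure B}, (P n).rnDeriv (Q n) x ^ (2 + δ) ∂Q n)) atTop < ⊤)
    (J_P J_Q : X × ℝ → ℝ≥0∞)
    (hLDP_P : SatisfiesLDP (fun n ↦ (P n).map fun x ↦ (M n x, action (P n) (Q n) n x)) J_P)
    (hLDP_Q : SatisfiesLDP (fun n ↦ (Q n).map fun x ↦ (M n x, action (P n) (Q n) n x)) J_Q)
    (hJ_P : IsGoodRate J_P) (hJ_Q : LowerSemicontinuous J_Q)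
    (hBgood : ⨅ m ∈ interior B, ⨅ w : ℝ, (((2 * w : ℝ) : EReal) + J_Q (m, w)) =
      ⨅ m ∈ closure B, ⨅ w : ℝ, (((2 * w : ℝ) : EReal) + J_Q (m, w)))
    (wstar : ℝ) (hwstar : ∀ w, (∃ m, J_Q (m, w) = 0) ↔ w = wstar) :
    Tendsto (fun n ↦ -expRate n (∫⁻ x in {x | M n x ∈ B}, (P n).rnDeriv (Q n) x ^ 2 ∂Q n)) atTop
        (𝓝 (2 * ⨅ m ∈ closure B, (I_P m : EReal))) ↔
      ⨅ m ∈ closure B, J_Q (m, wstar) = 0 ∧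
        -2 ∈ Subdiff (fun w ↦ ⨅ m ∈ closure B, (J_Q (m, w) : EReal)) wstar := by
  have hmap (n : ℕ) : ((P n).map fun x ↦ (M n x, action (P n) (Q n) n x)).map Prod.fst =
      (P n).map (M n) :=
    Measure.map_map measurable_fst ((hM n).prodMk (measurable_action _ _ n))
  simp only [← hmap] at hLDP_M
  have hfluct := fluctuation_relation (fun n ↦ (habs n).1) (fun n ↦ (habs n).2) hM hLDP_P hLDP_Q
    hJ_P.1 hJ_Q
  have hsecond := tendsto_neg_expRate_setLIntegral_rnDeriv_rpow (fun n ↦ (habs n).2) hM hLDP_Q hB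
    two_pos hδ hmom hBgood
  simp only [ENNReal.rpow_two] at hsecond
  obtain ⟨i, hi⟩ : ∃ i : ℝ, ((⨅ m ∈ closure B, I_P m : ℝ≥0∞) : EReal) = i :=
    ⟨_, (EReal.coe_ennreal_toReal hIPBfin).symm⟩
  have hle (m : X) (hm : m ∈ closure B) (w : ℝ) : (i : EReal) ≤ w + J_Q (m, w) := by
    rw [← hi, ← hfluct, EReal.coe_ennreal_le_coe_ennreal_iff]
    exact (iInf₂_le m hm).trans (hLDP_P.rate_map_le continuous_fst hLDP_M hI_P (m, w))
  have hmin : ∃ m ∈ closure B, ∃ w : ℝ, (w : EReal) + J_Q (m, w) ≤ i := by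
    obtain ⟨⟨m, w⟩, hm, hmw⟩ := hLDP_P.exists_rate_le_biInf_interior hJ_P continuous_fst hLDP_M
      (hIPB.trans_ne hIPBfin)
    refine ⟨m, hm, w, ?_⟩
    rwa [← hi, ← hfluct, EReal.coe_ennreal_le_coe_ennreal_iff, ← hIPB]
  rw [← biInf_mul_add_eq_mul_iff one_lt_two hle hmin fun m w h ↦ (hwstar w).1 ⟨m, h⟩,
    ← coe_ereal_biInf, hi, EReal.coe_mul]
  exact ⟨fun h ↦ tendsto_nhds_unique hsecond h, fun h ↦ h ▸ hsecond⟩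

end Efficiency

/-- Theorem 1: under Assumptions 1-4, `Q_n` is asymptotically efficient (i.e. `R_Q(B)` exists
and equals `2 I_P(B)`) if and only if `I_Q^B(w*) = 0` (typicality) and
`-2 ∈ ∂I_Q^B(w*)` (steepness). -/
theorem asymptotic_efficiency_characterization
    {D : ℕ} {Λ : ℕ → Type*} [∀ n, MeasurableSpace (Λ n)]
    (P Q : ∀ n, Measure (Λ n))
    [∀ n, IsProbabilityMeasure (P n)] [∀ n, IsProbabilityMeasure (Q n)]
    (habs : ∀ n, P n ≪ Q n ∧ Q n ≪ P n)
    (M : ∀ n, Λ n → (Fin D → ℝ)) (hM : ∀ n, Measurable (M n))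
    (B : Set (Fin D → ℝ)) (hB : MeasurableSet B)
    (I_P : (Fin D → ℝ) → ℝ≥0∞)
    (hLDP_M : SatisfiesLDP (fun n => (P n).map (M n)) I_P)
    (hIPgood : IsGoodRate I_P)
    (hIPB : (⨅ m ∈ interior B, I_P m) = ⨅ m ∈ closure B, I_P m)
    (hIPBfin : (⨅ m ∈ closure B, I_P m) ≠ ⊤)
    (δ : ℝ) (hδ : 0 < δ)
    (hmom : limsup (fun n : ℕ => expRate n
        (∫⁻ x in {x | M n x ∈ closure B},
          ((P n).rnDeriv (Q n) x) ^ ((2 : ℝ) + δ) ∂(Q n))) atTop < ⊤)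
    (J_P J_Q : (Fin D → ℝ) × ℝ → ℝ≥0∞)
    (hLDP_P : SatisfiesLDP (fun n => (P n).map (fun x => (M n x, action (P n) (Q n) n x))) J_P)
    (hLDP_Q : SatisfiesLDP (fun n => (Q n).map (fun x => (M n x, action (P n) (Q n) n x))) J_Q)
    (hJPgood : IsGoodRate J_P) (hJQgood : IsGoodRate J_Q)
    (hdom : {p | J_P p ≠ ⊤} = {p | J_Q p ≠ ⊤})
    (hne : {p | J_P p ≠ ⊤}.Nonempty)
    (hBgood : (⨅ m ∈ interior B, ⨅ w : ℝ, (((2 * w : ℝ) : EReal) + (J_Q (m, w) : EReal)))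
      = ⨅ m ∈ closure B, ⨅ w : ℝ, (((2 * w : ℝ) : EReal) + (J_Q (m, w) : EReal)))
    (mstar : Fin D → ℝ) (wstar : ℝ)
    (hzero : J_Q (mstar, wstar) = 0)
    (huniq : ∀ p : (Fin D → ℝ) × ℝ, J_Q p = 0 → p = (mstar, wstar)) :
    Tendsto (fun n : ℕ => -expRate n (∫⁻ x in {x | M n x ∈ B}, ((P n).rnDeriv (Q n) x) ^ 2 ∂(Q n))) atTop
        (𝓝 (2 * ⨅ m ∈ closure B, (I_P m : EReal)))
      ↔ ((⨅ m ∈ closure B, J_Q (m, wstar)) = 0 ∧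
          (-2 : ℝ) ∈ Subdiff (fun w : ℝ => ((⨅ m ∈ closure B, J_Q (m, w)) : EReal)) wstar) := by
  exact asymptotic_efficiency_characterization_general P Q habs M hM B hB I_P hLDP_M hIPgood.1 hIPB
    hIPBfin δ hδ hmom J_P J_Q hLDP_P hLDP_Q hJPgood hJQgood.1 hBgood wstar fun w ↦
      ⟨fun ⟨_, h⟩ ↦ congrArg Prod.snd (huniq _ h), fun h ↦ ⟨mstar, h ▸ hzero⟩⟩
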